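/- arXiv:2105.06924 — 5 statements merged into one kernel-verified Lean document; each statement's English description precedes it below -/
import Mathlib

section
/- For every vector v ∈ ℝⁿ, the Toeplitz-plus-Hankel matrix th(v) is diagonalized by the DCT matrix: C_n · th(v) · C_nᵀ = Diag(M v), the diagonal matrix whose p-th diagonal entry is the p-th component of M v, where M = W⁻¹ C_n (I + Z) is the n×n transform matrix. -/
open Matrix BigOperators Kronecker

noncomputable section

/-- The `n × n` discrete cosine transform (DCT) matrix, with 0-based indexing of the 1-based
formula `(C_n)_{ij} = √((2−δ_{i1})/n)·cos((i−1)(2j−1)π/(2n))`. -/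
def dctMatrix (n : ℕ) : Matrix (Fin n) (Fin n) ℝ :=
  Matrix.of fun i j =>
    Real.sqrt ((2 - if (i : ℕ) = 0 then 1 else 0) / n) *
      Real.cos ((i : ℝ) * (2 * (j : ℝ) + 1) * Real.pi / (2 * n))

/-- The `n × n` upshift matrix `Z`, with ones on the first superdiagonal. -/
def upshift (n : ℕ) : Matrix (Fin n) (Fin n) ℝ :=
  Matrix.of fun i j => if (i : ℕ) + 1 = (j : ℕ) then 1 else 0

/-- `W = diag(C_n(:,1))`, the diagonal matrix whose diagonal is the first column of the DCT
matrix. -/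
def Wdiag (n : ℕ) : Matrix (Fin n) (Fin n) ℝ :=
  Matrix.diagonal fun i => dctMatrix n i ⟨0, i.pos⟩

/-- The `n × n` transform matrix `M = W⁻¹ C_n (I + Z)`. -/
def transformM (n : ℕ) : Matrix (Fin n) (Fin n) ℝ :=
  (Wdiag n)⁻¹ * dctMatrix n * (1 + upshift n)

/-- The Hankel part `H_{p,q}` of the `(p,q)` block of `mat(A)` (0-based indices:
the 1-based conditions `p+q ≤ n3`, `p+q = n3+1`, `p+q ≥ n3+2` become
`p+q+1 < n3`, `p+q+1 = n3` and `p+q+1 > n3`, with blocks `A^{(p+q+1)}` resp. `0`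
resp. `A^{(2·n3−(p+q)−1)}` in 0-based numbering of the slices). -/
def hankelPart {n1 n2 n3 : ℕ} (A : Fin n3 → Matrix (Fin n1) (Fin n2) ℝ) (p q : Fin n3) :
    Matrix (Fin n1) (Fin n2) ℝ :=
  if h : p.val + q.val + 1 < n3 then A ⟨p.val + q.val + 1, h⟩
  else if h' : p.val + q.val + 1 = n3 then 0
  else A ⟨2 * n3 - (p.val + q.val) - 1, by
    have hp := p.isLt; have hq := q.isLt; omega⟩

/-- `mat(A)`: the block Toeplitz-plus-Hankel matrix associated with a third-order tensor `A`,
identified with the tuple of its frontal slices.  Rows are indexed by `Fin n3 × Fin n1`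
(block row, row within block) and columns by `Fin n3 × Fin n2`. -/
def tmat {n1 n2 n3 : ℕ} (A : Fin n3 → Matrix (Fin n1) (Fin n2) ℝ) :
    Matrix (Fin n3 × Fin n1) (Fin n3 × Fin n2) ℝ :=
  Matrix.of fun pi qj =>
    (A ⟨Nat.dist pi.1.val qj.1.val, by
        have hp := pi.1.isLt; have hq := qj.1.isLt
        simp only [Nat.dist]; omega⟩ + hankelPart A pi.1 qj.1) pi.2 qj.2

/-- The `p`-th transformed slice `Ã^{(p)} = Σ_q M_{pq} A^{(q)}` of a tensor `A`. -/
def tSlice {n1 n2 n3 : ℕ} (A : Fin n3 → Matrix (Fin n1) (Fin n2) ℝ) (p : Fin n3) :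
    Matrix (Fin n1) (Fin n2) ℝ :=
  ∑ q, transformM n3 p q • A q

/-- Toeplitz-plus-Hankel matrix `th(v)` of a vector `v ∈ ℝⁿ` (0-based indexing of the 1-based
formula of the paper). -/
def thMat {n : ℕ} (v : Fin n → ℝ) : Matrix (Fin n) (Fin n) ℝ :=
  Matrix.of fun p q =>
    v ⟨Nat.dist p.val q.val, by
        have hp := p.isLt; have hq := q.isLt; simp only [Nat.dist]; omega⟩ +
    (if h : p.val + q.val + 1 < n then v ⟨p.val + q.val + 1, h⟩
     else if h' : p.val + q.val + 1 = n then 0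
     else v ⟨2 * n - (p.val + q.val) - 1, by
       have hp := p.isLt; have hq := q.isLt; omega⟩)

/-- The product `a ⊛ B` of a tube `a ∈ ℝ^{1×1×n3}` (identified with a vector of `ℝ^{n3}`) with a
tensor `B`: the tensor whose transformed slices are `(a ⊛ B)~^{(p)} = (M a)_p • B̃^{(p)}`. -/
def tubeSMul {n1 n2 n3 : ℕ} (a : Fin n3 → ℝ) (B : Fin n3 → Matrix (Fin n1) (Fin n2) ℝ) :
    Fin n3 → Matrix (Fin n1) (Fin n2) ℝ :=
  fun t => ∑ p, (transformM n3)⁻¹ t p • ((transformM n3).mulVec a p • tSlice B p)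

/-- The c-product `a ⋆_c b` of two tubes: the tube whose transform is the componentwise product
of the transforms, `M (a ⋆_c b) = (M a) .* (M b)`. -/
def tubeCMul {n3 : ℕ} (a b : Fin n3 → ℝ) : Fin n3 → ℝ :=
  (transformM n3)⁻¹.mulVec fun p => (transformM n3).mulVec a p * (transformM n3).mulVec b p

/-- Frobenius norm of a real matrix. -/
def frobNorm {m n : ℕ} (B : Matrix (Fin m) (Fin n) ℝ) : ℝ :=
  Real.sqrt (∑ i, ∑ j, (B i j) ^ 2)

/-- Frobenius norm of a third-order tensor. -/
def tFrobNorm {n1 n2 n3 : ℕ} (A : Fin n3 → Matrix (Fin n1) (Fin n2) ℝ) : ℝ :=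
  Real.sqrt (∑ k, ∑ i, ∑ j, (A k i j) ^ 2)

/-- The `i`-th lateral slice `U(:,i,:)` of a tensor `U`: the `n1 × 1 × n3` tensor whose `k`-th
frontal slice is the `i`-th column of `U^{(k)}`. -/
def lateralSlice {n1 n2 n3 : ℕ} (U : Fin n3 → Matrix (Fin n1) (Fin n2) ℝ) (i : Fin n2) :
    Fin n3 → Matrix (Fin n1) (Fin 1) ℝ :=
  fun k => Matrix.of fun r _ => U k r i

/-- The `(i,j)` tube `S(i,j,:)` of a tensor `S`: the `1 × 1 × n3` tensor whose `k`-th frontal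
slice is the `(i,j)` entry of `S^{(k)}`. -/
def entryTube {n1 n2 n3 : ℕ} (S : Fin n3 → Matrix (Fin n1) (Fin n2) ℝ) (i : Fin n1) (j : Fin n2) :
    Fin n3 → Matrix (Fin 1) (Fin 1) ℝ :=
  fun k => Matrix.of fun _ _ => S k i j

/-- Slicewise transpose of a tensor. -/
def sTranspose {n1 n2 n3 : ℕ} (A : Fin n3 → Matrix (Fin n1) (Fin n2) ℝ) :
    Fin n3 → Matrix (Fin n2) (Fin n1) ℝ :=
  fun k => (A k)ᵀ

/-- `TVect(A)`: stacking the lateral slices of `A` one below the other; the `k`-th frontal slice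
of `TVect(A)` is obtained by stacking the columns of `A^{(k)}` (entry `r = j·n1 + i` is
`A^{(k)}_{i,j}`). -/
def tvect {n1 n2 n3 : ℕ} (A : Fin n3 → Matrix (Fin n1) (Fin n2) ℝ) :
    Fin n3 → Matrix (Fin (n1 * n2)) (Fin 1) ℝ :=
  fun k => Matrix.of fun r _ =>
    A k ⟨r.val % n1, Nat.mod_lt _ (Nat.pos_of_ne_zero fun h0 => absurd r.isLt (by simp [h0]))⟩
        ⟨r.val / n1, Nat.div_lt_of_lt_mul r.isLt⟩

lemma aux_sum (n : ℕ) (hn : 1 ≤ n) (m : ℤ) (h0 : m ≠ 0) (h1 : m < 2 * n) (h2 : -(2 * n : ℤ) < m) :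
    ∑ j : Fin n, Real.cos (m * (2 * ((j : ℕ) : ℝ) + 1) * Real.pi / (2 * n)) = 0 := by
  have hn0 : (n : ℝ) ≠ 0 := by positivity
  have hs : Real.sin (m * Real.pi / (2 * n)) ≠ 0 := by
    intro h
    obtain ⟨z, hz⟩ := Real.sin_eq_zero_iff.1 h
    have h3 : (z : ℝ) * (2 * n) = m := by
      have := Real.pi_ne_zero
      field_simp at hz
      linarith
    have h4 : z * (2 * n) = m := by exact_mod_cast h3
    have hz0 : z ≠ 0 := by rintro rfl; simp at h4; exact h0 h4.symm
    rcases lt_or_gt_of_ne hz0 with h | h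
    · have : z ≤ -1 := by omega
      nlinarith
    · have : 1 ≤ z := by omega
      nlinarith
  have key : ∀ N : ℕ, 2 * Real.sin (m * Real.pi / (2 * n)) *
      ∑ j ∈ Finset.range N, Real.cos (m * (2 * (j : ℝ) + 1) * Real.pi / (2 * n))
      = Real.sin (2 * N * (m * Real.pi / (2 * n))) := by
    intro N
    induction N with
    | zero => simp
    | succ N ih =>
      rw [Finset.sum_range_succ, mul_add, ih]
      set t := m * Real.pi / (2 * n) with ht
      have e1 : m * (2 * (N : ℝ) + 1) * Real.pi / (2 * n) = 2 * N * t + t := by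
        rw [ht]; ring
      have e2 : 2 * ((N + 1 : ℕ) : ℝ) * t = (2 * N * t + t) + t := by
        push_cast; ring
      have e3 : 2 * (N : ℝ) * t = (2 * N * t + t) - t := by ring
      rw [e2, e1, Real.sin_add (2 * N * t + t) t]
      nth_rw 1 [e3]
      rw [Real.sin_sub (2 * N * t + t) t]
      ring
  have hk := key n
  have e : 2 * (n : ℝ) * (m * Real.pi / (2 * n)) = m * Real.pi := by field_simp
  rw [e, Real.sin_int_mul_pi] at hk
  rw [Fin.sum_univ_eq_sum_range (fun j => Real.cos (m * (2 * (j : ℝ) + 1) * Real.pi / (2 * n)))]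
  exact (mul_eq_zero.1 hk).resolve_left (mul_ne_zero two_ne_zero hs)

lemma aux_orth (n : ℕ) (hn : 1 ≤ n) : dctMatrix n * (dctMatrix n)ᵀ = 1 := by
  have hn0 : (n : ℝ) ≠ 0 := by positivity
  have hn1 : (0 : ℝ) < n := by positivity
  ext k l
  have hk := k.isLt
  have hl := l.isLt
  rw [Matrix.mul_apply]
  simp only [Matrix.transpose_apply, dctMatrix, Matrix.of_apply]
  set a := Real.sqrt ((2 - if (k : ℕ) = 0 then 1 else 0) / n) with ha
  set b := Real.sqrt ((2 - if (l : ℕ) = 0 then 1 else 0) / n) with hb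
  have e : ∀ j : Fin n, a * Real.cos ((k : ℝ) * (2 * (j : ℝ) + 1) * Real.pi / (2 * n)) *
      (b * Real.cos ((l : ℝ) * (2 * (j : ℝ) + 1) * Real.pi / (2 * n))) =
      a * b / 2 * Real.cos (((k : ℤ) - (l : ℤ) : ℤ) * (2 * ((j : ℕ) : ℝ) + 1) * Real.pi / (2 * n))
      + a * b / 2 *
        Real.cos (((k : ℤ) + (l : ℤ) : ℤ) * (2 * ((j : ℕ) : ℝ) + 1) * Real.pi / (2 * n)) := by
    intro j
    have e1 : (((k : ℤ) - (l : ℤ) : ℤ) : ℝ) * (2 * ((j : ℕ) : ℝ) + 1) * Real.pi / (2 * n) =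
      (k : ℝ) * (2 * (j : ℝ) + 1) * Real.pi / (2 * n) -
      (l : ℝ) * (2 * (j : ℝ) + 1) * Real.pi / (2 * n) := by push_cast; ring
    have e2 : (((k : ℤ) + (l : ℤ) : ℤ) : ℝ) * (2 * ((j : ℕ) : ℝ) + 1) * Real.pi / (2 * n) =
      (k : ℝ) * (2 * (j : ℝ) + 1) * Real.pi / (2 * n) +
      (l : ℝ) * (2 * (j : ℝ) + 1) * Real.pi / (2 * n) := by push_cast; ring
    rw [e1, e2, Real.cos_add, Real.cos_sub]
    ring
  rw [Finset.sum_congr rfl (fun j _ => e j), Finset.sum_add_distrib, ← Finset.mul_sum,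
    ← Finset.mul_sum]
  by_cases hkl : k = l
  · subst hkl
    rw [Matrix.one_apply_eq]
    by_cases h0 : (k : ℕ) = 0
    · have hab : a * a = 1 / n := by
        rw [ha, if_pos h0, Real.mul_self_sqrt]
        · norm_num
        · apply div_nonneg <;> norm_num
      have hba : b = a := rfl
      rw [hba, hab]
      simp [h0]
      field_simp
      norm_num
    · rw [aux_sum n hn ((k : ℤ) + (k : ℤ)) (by omega) (by omega) (by omega)]
      have hab : a * b = 2 / n := by
        rw [ha, hb, if_neg h0, Real.mul_self_sqrt]
        · norm_num
        · apply div_nonneg <;> norm_num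
      rw [hab]
      simp
      field_simp
  · have hne : (k : ℕ) ≠ l := fun h => hkl (Fin.ext h)
    rw [aux_sum n hn ((k : ℤ) + (l : ℤ)) (by omega) (by omega) (by omega),
      aux_sum n hn ((k : ℤ) - (l : ℤ)) (by omega) (by omega) (by omega),
      Matrix.one_apply_ne hkl]
    simp

lemma aux_cos_ne (n : ℕ) (k : Fin n) : Real.cos ((k : ℝ) * Real.pi / (2 * n)) ≠ 0 := by
  have hk := k.isLt
  have hn1 : (0 : ℝ) < n := by exact_mod_cast k.pos
  have hkn : ((k : ℕ) : ℝ) < n := by exact_mod_cast hk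
  apply ne_of_gt
  apply Real.cos_pos_of_mem_Ioo
  constructor
  · have : 0 ≤ (k : ℝ) * Real.pi / (2 * n) := by positivity
    linarith [Real.pi_pos]
  · rw [div_lt_div_iff₀ (by positivity) (by norm_num)]
    nlinarith [Real.pi_pos]

/-- transform matrix entries -/
lemma aux_M (n : ℕ) (k j : Fin n) : transformM n k j =
    (if (j : ℕ) = 0 then 1 else 2) * Real.cos (2 * (k : ℝ) * (j : ℝ) * Real.pi / (2 * n)) := by
  have hn1 : (0 : ℝ) < n := by exact_mod_cast k.pos
  set a := Real.sqrt ((2 - if (k : ℕ) = 0 then 1 else 0) / n) with ha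
  have ha0 : a ≠ 0 := by
    apply ne_of_gt
    apply Real.sqrt_pos.2
    apply div_pos _ hn1
    split_ifs <;> norm_num
  have hc := aux_cos_ne n k
  have hd : ∀ i : Fin n, dctMatrix n i ⟨0, i.pos⟩ ≠ 0 := by
    intro i
    have hc := aux_cos_ne n i
    simp only [dctMatrix, Matrix.of_apply]
    apply mul_ne_zero
    · apply ne_of_gt
      apply Real.sqrt_pos.2
      apply div_pos _ hn1
      split_ifs <;> norm_num
    · simpa using hc
  have hW : (Wdiag n)⁻¹ = Matrix.diagonal fun i => (dctMatrix n i ⟨0, i.pos⟩)⁻¹ := by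
    apply Matrix.inv_eq_right_inv
    rw [Wdiag, Matrix.diagonal_mul_diagonal, ← Matrix.diagonal_one]
    congr 1
    ext i
    exact mul_inv_cancel₀ (hd i)
  rw [transformM, hW, Matrix.mul_assoc, Matrix.diagonal_mul]
  rw [inv_mul_eq_iff_eq_mul₀ (hd k), Matrix.mul_add, Matrix.mul_one, Matrix.add_apply,
    Matrix.mul_apply]
  by_cases hj : (j : ℕ) = 0
  · have : j = ⟨0, k.pos⟩ := Fin.ext hj
    subst this
    simp [upshift]
  · have hs : ∑ i, dctMatrix n k i * upshift n i j =
        dctMatrix n k ⟨(j : ℕ) - 1, by omega⟩ := by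
      rw [Finset.sum_eq_single (⟨(j : ℕ) - 1, by omega⟩ : Fin n)]
      · have : (j : ℕ) - 1 + 1 = j := by omega
        simp [upshift, this]
      · intro b _ hb
        have : (b : ℕ) + 1 ≠ j := by
          intro h; apply hb; apply Fin.ext; simp; omega
        simp [upshift, this]
      · simp
    rw [hs]
    have hj1 : (((j : ℕ) - 1 : ℕ) : ℝ) = (j : ℝ) - 1 := by
      rw [Nat.cast_sub (by omega)]; simp
    simp only [dctMatrix, Matrix.of_apply, hj1, if_neg hj, ← ha]
    have e1 : (k : ℝ) * (2 * (j : ℝ) + 1) * Real.pi / (2 * n) =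
      2 * (k : ℝ) * (j : ℝ) * Real.pi / (2 * n) + (k : ℝ) * Real.pi / (2 * n) := by ring
    have e2 : (k : ℝ) * (2 * ((j : ℝ) - 1) + 1) * Real.pi / (2 * n) =
      2 * (k : ℝ) * (j : ℝ) * Real.pi / (2 * n) - (k : ℝ) * Real.pi / (2 * n) := by ring
    have e3 : (k : ℝ) * (2 * ((0 : ℕ) : ℝ) + 1) * Real.pi / (2 * n) =
      (k : ℝ) * Real.pi / (2 * n) := by simp
    rw [e1, e2, e3, Real.cos_add, Real.cos_sub]
    ring

def auxA (n q j : ℕ) : ℕ := if q + j < n then q + j else 2 * n - 1 - q - j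
def auxB (q j : ℕ) : ℕ := if j ≤ q then q - j else j - q - 1

def auxT (n p q j : ℕ) : ℝ :=
  if j = 0 then (if p = q then 1 else 0)
  else (if p = auxA n q j then 1 else 0) + (if p = auxB q j then 1 else 0)

lemma aux_single {n : ℕ} (v : Fin n → ℝ) (t : Fin n) :
    v t = ∑ j : Fin n, v j * (if (j : ℕ) = t then 1 else 0) := by
  simp [Fin.val_inj]

lemma aux_nat1 (n p q j : ℕ) (hp : p < n) (hq : q < n) (hj : j < n) (h1 : p + q + 1 < n) :
    (if j = Nat.dist p q then (1 : ℝ) else 0) + (if j = p + q + 1 then (1 : ℝ) else 0) = auxT n p q j := by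
  unfold auxT auxA auxB Nat.dist
  grind

lemma aux_nat2 (n p q j : ℕ) (hp : p < n) (hq : q < n) (hj : j < n) (h2 : p + q + 1 = n) :
    (if j = Nat.dist p q then (1 : ℝ) else 0) = auxT n p q j := by
  unfold auxT auxA auxB Nat.dist
  grind

lemma aux_nat3 (n p q j : ℕ) (hp : p < n) (hq : q < n) (hj : j < n) (h1 : ¬ p + q + 1 < n)
    (h2 : ¬ p + q + 1 = n) :
    (if j = Nat.dist p q then (1 : ℝ) else 0) +
      (if j = 2 * n - (p + q) - 1 then (1 : ℝ) else 0) = auxT n p q j := by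
  unfold auxT auxA auxB Nat.dist
  grind

lemma aux_th {n : ℕ} (v : Fin n → ℝ) (p q : Fin n) :
    thMat v p q = ∑ j : Fin n, v j * auxT n p q j := by
  have hp := p.isLt
  have hq := q.isLt
  simp only [thMat, Matrix.of_apply]
  split_ifs with h1 h2
  · rw [aux_single v ⟨Nat.dist _ _, _⟩, aux_single v ⟨_, h1⟩, ← Finset.sum_add_distrib]
    refine Finset.sum_congr rfl fun j _ => ?_
    rw [← mul_add]
    congr 1
    have hj := j.isLt
    exact aux_nat1 n p q j hp hq hj h1
  · rw [aux_single v ⟨Nat.dist _ _, _⟩, add_zero]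
    refine Finset.sum_congr rfl fun j _ => ?_
    congr 1
    have hj := j.isLt
    exact aux_nat2 n p q j hp hq hj h2
  · rw [aux_single v ⟨Nat.dist _ _, _⟩, aux_single v ⟨2 * n - _ - 1, _⟩,
      ← Finset.sum_add_distrib]
    refine Finset.sum_congr rfl fun j _ => ?_
    rw [← mul_add]
    congr 1
    have hj := j.isLt
    exact aux_nat3 n p q j hp hq hj h1 h2

lemma aux_pick {n : ℕ} (f : ℕ → ℝ) (t : ℕ) (ht : t < n) :
    ∑ p : Fin n, f p * (if (p : ℕ) = t then 1 else 0) = f t :=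
  (aux_single (fun p : Fin n => f p) ⟨t, ht⟩).symm

lemma aux_col (n : ℕ) (k q j : Fin n) :
    ∑ p : Fin n, Real.cos ((k : ℝ) * (2 * (p : ℝ) + 1) * Real.pi / (2 * n)) * auxT n p q j =
    ((if (j : ℕ) = 0 then 1 else 2) * Real.cos (2 * (k : ℝ) * (j : ℝ) * Real.pi / (2 * n))) *
      Real.cos ((k : ℝ) * (2 * (q : ℝ) + 1) * Real.pi / (2 * n)) := by
  have hn0 : (n : ℝ) ≠ 0 := by exact_mod_cast k.pos.ne'
  have hq := q.isLt
  have hj := j.isLt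
  let f : ℕ → ℝ := fun p => Real.cos ((k : ℝ) * (2 * (p : ℝ) + 1) * Real.pi / (2 * n))
  have hf : f = fun p : ℕ => Real.cos ((k : ℝ) * (2 * (p : ℝ) + 1) * Real.pi / (2 * n)) := rfl
  change ∑ p : Fin n, f p * auxT n p q j = _ * f q
  by_cases h : (j : ℕ) = 0
  · simp only [auxT, if_pos h]
    rw [aux_pick f q hq]
    simp [h, hf]
  · simp only [auxT, if_neg h, mul_add, Finset.sum_add_distrib]
    rw [aux_pick f (auxA n q j) (by unfold auxA; split_ifs <;> omega),
      aux_pick f (auxB q j) (by unfold auxB; split_ifs <;> omega)]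
    set x := 2 * (k : ℝ) * (j : ℝ) * Real.pi / (2 * n) with hx
    set y := (k : ℝ) * (2 * (q : ℝ) + 1) * Real.pi / (2 * n) with hy
    have hfq : f q = Real.cos y := rfl
    have hA : f (auxA n q j) = Real.cos (y + x) := by
      unfold auxA
      split_ifs with h1
      · simp only [hf]; congr 1; rw [hx, hy]; push_cast; ring
      · simp only [hf]
        have : ((2 * n - 1 - (q : ℕ) - (j : ℕ) : ℕ) : ℝ) = 2 * n - 1 - (q : ℝ) - (j : ℝ) := by
          rw [Nat.cast_sub (by omega), Nat.cast_sub (by omega), Nat.cast_sub (by omega)]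
          push_cast; ring
        rw [this, ← Real.cos_neg (y + x), ← Real.cos_add_nat_mul_two_pi (-(y + x)) (k : ℕ)]
        congr 1; rw [hx, hy]; field_simp; ring
    have hB : f (auxB q j) = Real.cos (y - x) := by
      unfold auxB
      split_ifs with h1
      · simp only [hf]; congr 1; rw [hx, hy, Nat.cast_sub h1]; ring
      · simp only [hf]
        have : (((j : ℕ) - (q : ℕ) - 1 : ℕ) : ℝ) = (j : ℝ) - (q : ℝ) - 1 := by
          rw [Nat.cast_sub (by omega), Nat.cast_sub (by omega)]
          push_cast; ring
        rw [this, ← Real.cos_neg (y - x)]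
        congr 1; rw [hx, hy]; ring
    rw [hA, hB, hfq, Real.cos_add, Real.cos_sub]
    ring

lemma aux_comm (n : ℕ) (v : Fin n → ℝ) :
    dctMatrix n * thMat v = Matrix.diagonal ((transformM n).mulVec v) * dctMatrix n := by
  ext k q
  rw [Matrix.mul_apply, Matrix.diagonal_mul, Matrix.mulVec, dotProduct, Finset.sum_mul]
  simp only [aux_th, aux_M, Finset.mul_sum]
  rw [Finset.sum_comm]
  refine Finset.sum_congr rfl fun j _ => ?_
  have h := aux_col n k q j
  simp only [dctMatrix, Matrix.of_apply]
  set a := Real.sqrt ((2 - if (k : ℕ) = 0 then 1 else 0) / n) with ha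
  calc _ = a * v j * ∑ p : Fin n,
        Real.cos ((k : ℝ) * (2 * (p : ℝ) + 1) * Real.pi / (2 * n)) * auxT n p q j := by
        rw [Finset.mul_sum]
        refine Finset.sum_congr rfl fun p _ => ?_
        ring
    _ = _ := by rw [h]; ring

/-- for every `v ∈ ℝⁿ`, the Toeplitz-plus-Hankel matrix `th(v)` is diagonalized
by the DCT matrix: `C_n · th(v) · C_nᵀ = Diag(M v)` where `M = W⁻¹ C_n (I + Z)`. -/
theorem dct_diagonalizes_thMat (n : ℕ) (hn : 1 ≤ n) (v : Fin n → ℝ) :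
    dctMatrix n * thMat v * (dctMatrix n)ᵀ =
      Matrix.diagonal ((transformM n).mulVec v) := by
  rw [aux_comm, Matrix.mul_assoc, aux_orth n hn, Matrix.mul_one]

end
end

section
/- For every third-order tensor A ∈ ℝ^{n1×n2×n3}, the block matrix mat(A) is block-diagonalized by the DCT: (C_{n3} ⊗ I_{n1}) · mat(A) · (C_{n3}ᵀ ⊗ I_{n2}) equals the block-diagonal matrix blockdiag(Ã^{(1)}, …, Ã^{(n3)}) whose p-th diagonal block is the p-th transformed slice Ã^{(p)} of A; here ⊗ denotes the Kronecker product. -/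
open Matrix BigOperators Kronecker

noncomputable section

lemma dct_sum_cos (n : ℕ) (m : ℤ) (h0 : 0 < m) (h1 : m < 2 * n) :
    ∑ q : Fin n, Real.cos ((m : ℝ) * (2 * (q : ℝ) + 1) * Real.pi / (2 * n)) = 0 := by
  have hn : (0 : ℝ) < n := by
    have : 0 < (n : ℤ) := by omega
    exact_mod_cast this
  have h0' : (0 : ℝ) < m := by exact_mod_cast h0
  have h1' : (m : ℝ) < 2 * n := by exact_mod_cast h1
  have hpi := Real.pi_pos
  have hs : 0 < Real.sin ((m : ℝ) * Real.pi / (2 * n)) := by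
    apply Real.sin_pos_of_pos_of_lt_pi
    · positivity
    · rw [div_lt_iff₀ (by positivity)]; nlinarith
  have key : ∀ q : ℕ, 2 * Real.sin ((m : ℝ) * Real.pi / (2 * n)) *
      Real.cos ((m : ℝ) * (2 * (q : ℝ) + 1) * Real.pi / (2 * n)) =
      Real.sin ((m : ℝ) * ((q + 1 : ℕ) : ℝ) * Real.pi / n) -
        Real.sin ((m : ℝ) * (q : ℝ) * Real.pi / n) := by
    intro q
    rw [Real.sin_sub_sin]
    congr 2
    · congr 1; push_cast; field_simp; ring
    · push_cast; field_simp; ring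
  rw [Fin.sum_univ_eq_sum_range
    (fun q : ℕ => Real.cos ((m : ℝ) * (2 * (q : ℝ) + 1) * Real.pi / (2 * n)))]
  have : 2 * Real.sin ((m : ℝ) * Real.pi / (2 * n)) * ∑ q ∈ Finset.range n,
      Real.cos ((m : ℝ) * (2 * (q : ℝ) + 1) * Real.pi / (2 * n)) = 0 := by
    rw [Finset.mul_sum, Finset.sum_congr rfl (fun q _ => key q),
      Finset.sum_range_sub (fun q : ℕ => Real.sin ((m : ℝ) * (q : ℝ) * Real.pi / n))]
    have : (m : ℝ) * (n : ℝ) * Real.pi / n = m * Real.pi := by field_simp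
    simp [this]
  rcases mul_eq_zero.1 this with h | h
  · linarith
  · exact h

lemma dct_cos_prod (n : ℕ) (i j : Fin n) :
    ∑ q : Fin n, Real.cos ((i : ℝ) * (2 * (q : ℝ) + 1) * Real.pi / (2 * n)) *
      Real.cos ((j : ℝ) * (2 * (q : ℝ) + 1) * Real.pi / (2 * n)) =
    if i = j then (if (i : ℕ) = 0 then (n : ℝ) else n / 2) else 0 := by
  have gen : ∀ i j : Fin n, j ≤ i →
    ∑ q : Fin n, Real.cos ((i : ℝ) * (2 * (q : ℝ) + 1) * Real.pi / (2 * n)) *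
      Real.cos ((j : ℝ) * (2 * (q : ℝ) + 1) * Real.pi / (2 * n)) =
    if i = j then (if (i : ℕ) = 0 then (n : ℝ) else n / 2) else 0 := by
    intro i j hij
    have hi := i.isLt
    have hj := j.isLt
    have hij' : (j : ℕ) ≤ i := hij
    have e : ∀ q : Fin n, Real.cos ((i : ℝ) * (2 * (q : ℝ) + 1) * Real.pi / (2 * n)) *
      Real.cos ((j : ℝ) * (2 * (q : ℝ) + 1) * Real.pi / (2 * n)) =
      (Real.cos ((((i : ℕ) - (j : ℕ) : ℤ) : ℝ) * (2 * (q : ℝ) + 1) * Real.pi / (2 * n)) +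
      Real.cos ((((i : ℕ) + (j : ℕ) : ℤ) : ℝ) * (2 * (q : ℝ) + 1) * Real.pi / (2 * n))) / 2 := by
      intro q
      have := Real.two_mul_cos_mul_cos ((i : ℝ) * (2 * (q : ℝ) + 1) * Real.pi / (2 * n))
        ((j : ℝ) * (2 * (q : ℝ) + 1) * Real.pi / (2 * n))
      rw [← sub_div, ← add_div] at this
      push_cast
      simp only [sub_mul, add_mul] at this ⊢
      linarith
    rw [Finset.sum_congr rfl (fun q _ => e q), ← Finset.sum_div, Finset.sum_add_distrib]
    by_cases h : i = j
    · subst h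
      by_cases h0 : (i : ℕ) = 0
      · simp [h0]
      · rw [dct_sum_cos n ((i : ℕ) + (i : ℕ) : ℤ) (by omega) (by omega)]
        simp [h0]
    · have h' : (i : ℕ) ≠ j := fun h' => h (Fin.ext h')
      rw [dct_sum_cos n ((i : ℕ) + (j : ℕ) : ℤ) (by omega) (by omega),
        dct_sum_cos n ((i : ℕ) - (j : ℕ) : ℤ) (by omega) (by omega)]
      simp [h]
  rcases le_total j i with h | h
  · exact gen i j h
  · have := gen j i h
    simp only [mul_comm (Real.cos ((i : ℝ) * _ * _ / _))]
    rw [this]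
    by_cases hh : i = j
    · subst hh; rfl
    · rw [if_neg hh, if_neg (Ne.symm hh)]

lemma dct_orth (n : ℕ) : dctMatrix n * (dctMatrix n)ᵀ = 1 := by
  ext i j
  have hn : (0 : ℝ) < n := by exact_mod_cast i.pos
  simp only [mul_apply, transpose_apply, dctMatrix, of_apply]
  rw [Finset.sum_congr rfl (fun q _ => mul_mul_mul_comm _ _ _ _), ← Finset.mul_sum, dct_cos_prod]
  by_cases h : i = j
  · subst h
    rw [Real.mul_self_sqrt (by apply div_nonneg _ hn.le; split_ifs <;> norm_num)]
    by_cases h0 : (i : ℕ) = 0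
    · have h21 : (2 - 1 : ℝ) = 1 := by norm_num
      simp only [h0, if_true, one_apply_eq, h21]; field_simp
    · simp only [h0, if_true, if_false, one_apply_eq, sub_zero]; field_simp
  · simp [h]

lemma transformM_apply' (n : ℕ) (p q : Fin n) :
    transformM n p q = if (q : ℕ) = 0 then 1 else 2 * Real.cos ((p : ℝ) * q * Real.pi / n) := by
  have hn : (0 : ℝ) < n := by exact_mod_cast p.pos
  have hp : (p : ℝ) < n := by exact_mod_cast p.isLt
  have hpi := Real.pi_pos
  have hs : 0 < Real.sqrt ((2 - if (p : ℕ) = 0 then 1 else 0) / n) := by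
    apply Real.sqrt_pos.2; apply div_pos _ hn; split_ifs <;> norm_num
  have hc : 0 < Real.cos ((p : ℝ) * Real.pi / (2 * n)) := by
    apply Real.cos_pos_of_mem_Ioo
    constructor
    · have : 0 ≤ (p : ℝ) * Real.pi / (2 * n) := by positivity
      linarith
    · rw [div_lt_iff₀ (by positivity)]; nlinarith
  have hW0 : ∀ i : Fin n, dctMatrix n i ⟨0, i.pos⟩ ≠ 0 := by
    intro i
    have hi : (i : ℝ) < n := by exact_mod_cast i.isLt
    simp only [dctMatrix, of_apply]
    apply mul_ne_zero
    · apply ne_of_gt; apply Real.sqrt_pos.2; apply div_pos _ hn; split_ifs <;> norm_num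
    · apply ne_of_gt
      apply Real.cos_pos_of_mem_Ioo
      constructor
      · have : 0 ≤ (i : ℝ) * (2 * ((0 : ℕ) : ℝ) + 1) * Real.pi / (2 * n) := by positivity
        linarith
      · rw [div_lt_iff₀ (by positivity)]; push_cast; nlinarith
  have hinv : (Wdiag n)⁻¹ = Matrix.diagonal fun i => (dctMatrix n i ⟨0, i.pos⟩)⁻¹ := by
    apply Matrix.inv_eq_right_inv
    rw [Wdiag, diagonal_mul_diagonal, ← diagonal_one]
    congr 1
    ext i
    exact mul_inv_cancel₀ (hW0 i)
  rw [transformM, hinv, Matrix.mul_assoc, diagonal_mul, Matrix.mul_add, Matrix.mul_one, Matrix.add_apply]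
  rw [inv_mul_eq_iff_eq_mul₀ (hW0 p)]
  by_cases hq : (q : ℕ) = 0
  · have : q = ⟨0, p.pos⟩ := Fin.ext hq
    subst this
    simp [mul_apply, upshift]
  · rw [if_neg hq, mul_apply, Finset.sum_eq_single (⟨(q : ℕ) - 1, by omega⟩ : Fin n)]
    · have h1 : (q : ℕ) - 1 + 1 = q := by omega
      have h2 : (((q : ℕ) - 1 : ℕ) : ℝ) = (q : ℝ) - 1 := by
        rw [Nat.cast_sub (by omega)]; simp
      simp only [upshift, of_apply, h1, if_true, dctMatrix, mul_one, h2]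
      rw [← mul_add, Real.cos_add_cos]
      have a1 : ((p : ℝ) * (2 * (q : ℝ) + 1) * Real.pi / (2 * n) +
          (p : ℝ) * (2 * ((q : ℝ) - 1) + 1) * Real.pi / (2 * n)) / 2 =
          (p : ℝ) * q * Real.pi / n := by field_simp; ring
      have a2 : ((p : ℝ) * (2 * (q : ℝ) + 1) * Real.pi / (2 * n) -
          (p : ℝ) * (2 * ((q : ℝ) - 1) + 1) * Real.pi / (2 * n)) / 2 =
          (p : ℝ) * (2 * ((0 : ℕ) : ℝ) + 1) * Real.pi / (2 * n) := by
        push_cast; field_simp; ring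
      rw [a1, a2]
      ring
    · intro b _ hb
      have : (b : ℕ) + 1 ≠ q := fun h => hb (Fin.ext (by simp; omega))
      simp [upshift, this]
    · simp

/-- coefficient of `v k` in `thMat v p q`. -/
lemma thMat_eq_sum {n : ℕ} (v : Fin n → ℝ) (p q : Fin n) :
    thMat v p q = ∑ k : Fin n, v k *
      ((if Nat.dist p q = k then 1 else 0) + ((if (p : ℕ) + q + 1 = k then 1 else 0) +
       (if (p : ℕ) + q + 1 + k = 2 * n then 1 else 0))) := by
  have hp := p.isLt
  have hq := q.isLt
  have aux : ∀ (m : ℕ) (hm : m < n), ∑ k : Fin n, v k * (if m = (k : ℕ) then 1 else 0) = v ⟨m, hm⟩ := by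
    intro m hm
    rw [Finset.sum_eq_single ⟨m, hm⟩]
    · simp
    · intro b _ hb
      have : m ≠ b := fun h => hb (Fin.ext h.symm)
      simp [this]
    · simp
  simp only [mul_add, Finset.sum_add_distrib]
  rw [aux _ (by simp only [Nat.dist]; omega)]
  simp only [thMat, of_apply]
  congr 1
  split_ifs with h h'
  · rw [aux _ h, Finset.sum_eq_zero (s := Finset.univ)
      (f := fun k : Fin n => v k * (if (p : ℕ) + q + 1 + k = 2 * n then 1 else 0))]
    · simp
    · intro k _
      have := k.isLt
      rw [if_neg (by omega)]; simp
  · rw [Finset.sum_eq_zero, Finset.sum_eq_zero]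
    · simp
    · intro k _
      have := k.isLt
      rw [if_neg (by omega)]; simp
    · intro k _
      have := k.isLt
      rw [if_neg (by omega)]; simp
  · rw [Finset.sum_eq_zero, zero_add, ← aux]
    · apply Finset.sum_congr rfl
      intro k _
      congr 1
      have := k.isLt
      apply if_congr _ rfl rfl
      omega
    · intro k _
      have := k.isLt
      rw [if_neg (by omega)]; simp

lemma th_cos_row {n : ℕ} (j p k : Fin n) :
    ∑ q : Fin n, ((if Nat.dist p q = k then (1 : ℝ) else 0) +
      ((if (p : ℕ) + q + 1 = k then 1 else 0) +
       (if (p : ℕ) + q + 1 + k = 2 * n then 1 else 0))) * dctMatrix n j q =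
    transformM n j k * dctMatrix n j p := by
  have hn : (0 : ℝ) < n := by exact_mod_cast p.pos
  have hp := p.isLt
  have hk := k.isLt
  rw [transformM_apply']
  have single : ∀ (m : ℕ) (hm : m < n),
      ∑ q : Fin n, (if (q : ℕ) = m then (1 : ℝ) else 0) * dctMatrix n j q
        = dctMatrix n j ⟨m, hm⟩ := by
    intro m hm
    rw [Finset.sum_eq_single ⟨m, hm⟩]
    · simp
    · intro b _ hb
      have : (b : ℕ) ≠ m := fun h => hb (Fin.ext h)
      simp [this]
    · simp
  by_cases h0 : (k : ℕ) = 0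
  · rw [if_pos h0, one_mul, ← single p hp]
    apply Finset.sum_congr rfl
    intro q _
    have hq := q.isLt
    congr 1
    rw [if_neg (show ¬ ((p : ℕ) + q + 1 = k) by omega),
      if_neg (show ¬ ((p : ℕ) + q + 1 + k = 2 * n) by omega), add_zero, add_zero]
    apply if_congr _ rfl rfl
    simp only [Nat.dist]; omega
  · rw [if_neg h0]
    have hA : (if (k : ℕ) ≤ p then (p : ℕ) - k else k - p - 1) < n := by split_ifs <;> omega
    have hB : (if (p : ℕ) + k < n then (p : ℕ) + k else 2 * n - 1 - k - p) < n := by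
      split_ifs <;> omega
    have eA : dctMatrix n j ⟨_, hA⟩ =
        Real.sqrt ((2 - if (j : ℕ) = 0 then 1 else 0) / n) *
      Real.cos ((j : ℝ) * (2 * ((p : ℝ) - k) + 1) * Real.pi / (2 * n)) := by
      simp only [dctMatrix, of_apply]
      congr 1
      split_ifs with h
      · rw [Nat.cast_sub h]
      · rw [← Real.cos_neg]
        congr 1
        rw [Nat.cast_sub (by omega), Nat.cast_sub (by omega)]
        push_cast; ring
    have eB : dctMatrix n j ⟨_, hB⟩ =
        Real.sqrt ((2 - if (j : ℕ) = 0 then 1 else 0) / n) *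
      Real.cos ((j : ℝ) * (2 * ((p : ℝ) + k) + 1) * Real.pi / (2 * n)) := by
      simp only [dctMatrix, of_apply]
      congr 1
      split_ifs with h
      · rw [Nat.cast_add]
      · rw [← Real.cos_nat_mul_two_pi_sub _ (j : ℕ)]
        congr 1
        rw [Nat.cast_sub (by omega), Nat.cast_sub (by omega), Nat.cast_sub (by omega)]
        push_cast; field_simp; ring
    have hsum : ∑ q : Fin n, ((if Nat.dist p q = k then (1 : ℝ) else 0) +
      ((if (p : ℕ) + q + 1 = k then 1 else 0) +
       (if (p : ℕ) + q + 1 + k = 2 * n then 1 else 0))) * dctMatrix n j q =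
       dctMatrix n j ⟨_, hA⟩ + dctMatrix n j ⟨_, hB⟩ := by
      rw [← single _ hA, ← single _ hB, ← Finset.sum_add_distrib]
      apply Finset.sum_congr rfl
      intro q _
      rw [← add_mul]
      congr 1
      have hq := q.isLt
      have hd : Nat.dist p q = (p : ℕ) - q + (q - p) := rfl
      rw [hd]
      clear eA eB single
      by_cases h1 : (k : ℕ) ≤ p <;> by_cases h2 : (p : ℕ) + k < n
      · rw [if_pos h1, if_pos h2]
        split_ifs <;> first | omega | norm_num
      · rw [if_pos h1, if_neg h2]
        split_ifs <;> first | omega | norm_num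
      · rw [if_neg h1, if_pos h2]
        split_ifs <;> first | omega | norm_num
      · rw [if_neg h1, if_neg h2]
        split_ifs <;> first | omega | norm_num
    rw [hsum, eA, eB, ← mul_add, Real.cos_add_cos]
    simp only [dctMatrix, of_apply]
    have a1 : ((j : ℝ) * (2 * ((p : ℝ) - k) + 1) * Real.pi / (2 * n) +
      (j : ℝ) * (2 * ((p : ℝ) + k) + 1) * Real.pi / (2 * n)) / 2 =
      (j : ℝ) * (2 * (p : ℝ) + 1) * Real.pi / (2 * n) := by field_simp; ring
    have a2 : ((j : ℝ) * (2 * ((p : ℝ) - k) + 1) * Real.pi / (2 * n) -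
      (j : ℝ) * (2 * ((p : ℝ) + k) + 1) * Real.pi / (2 * n)) / 2 =
      -((j : ℝ) * k * Real.pi / n) := by field_simp; ring
    rw [a1, a2, Real.cos_neg]
    ring

lemma thMat_mul_dctT {n : ℕ} (v : Fin n → ℝ) :
    thMat v * (dctMatrix n)ᵀ = (dctMatrix n)ᵀ * diagonal ((transformM n).mulVec v) := by
  ext p j
  rw [mul_diagonal, mul_apply]
  simp only [transpose_apply, thMat_eq_sum, Finset.sum_mul]
  rw [Finset.sum_comm]
  simp only [mul_assoc, ← Finset.mul_sum]
  simp only [th_cos_row, mulVec, dotProduct, Finset.mul_sum]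
  apply Finset.sum_congr rfl
  intro k _
  ring

lemma dct_thMat_dctT {n : ℕ} (v : Fin n → ℝ) :
    dctMatrix n * thMat v * (dctMatrix n)ᵀ = diagonal ((transformM n).mulVec v) := by
  rw [Matrix.mul_assoc, thMat_mul_dctT, ← Matrix.mul_assoc, dct_orth, Matrix.one_mul]

lemma tmat_apply_eq {n1 n2 n3 : ℕ} (A : Fin n3 → Matrix (Fin n1) (Fin n2) ℝ)
    (r s : Fin n3) (a : Fin n1) (b : Fin n2) :
    tmat A (r, a) (s, b) = thMat (fun k => A k a b) r s := by
  simp only [tmat, thMat, hankelPart, of_apply, Matrix.add_apply]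
  congr 1
  split_ifs <;> rfl

/-- `(C_{n3} ⊗ I_{n1}) · mat(A) · (C_{n3}ᵀ ⊗ I_{n2})` is the block-diagonal matrix
whose `p`-th diagonal block is the `p`-th transformed slice `Ã^{(p)}` of `A`. -/
theorem tmat_block_diagonalized {n1 n2 n3 : ℕ}
    (A : Fin n3 → Matrix (Fin n1) (Fin n2) ℝ) :
    (dctMatrix n3 ⊗ₖ (1 : Matrix (Fin n1) (Fin n1) ℝ)) * tmat A *
        ((dctMatrix n3)ᵀ ⊗ₖ (1 : Matrix (Fin n2) (Fin n2) ℝ)) =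
      Matrix.of fun pi qj =>
        if pi.1 = qj.1 then tSlice A pi.1 pi.2 qj.2 else 0 := by
  ext ⟨p, a⟩ ⟨q, b⟩
  have h := congrFun (congrFun (dct_thMat_dctT (fun k => A k a b)) p) q
  simp only [mul_apply, Fintype.sum_prod_type, kroneckerMap_apply, one_apply, mul_ite, ite_mul,
    mul_one, mul_zero, zero_mul, Finset.sum_ite_eq, Finset.sum_ite_eq', Finset.mem_univ, if_true,
    tmat_apply_eq, transpose_apply, of_apply] at h ⊢
  rw [h, diagonal_apply]
  simp [tSlice, mulVec, dotProduct, Matrix.sum_apply]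

end
end

section
/- The c-product is well defined: for all tensors A ∈ ℝ^{n1×n2×n3} and B ∈ ℝ^{n2×m×n3}, there exists a unique tensor C ∈ ℝ^{n1×m×n3} such that mat(C) = mat(A) · mat(B); that is, the class of block Toeplitz-plus-Hankel matrices of the form mat(·) is closed under matrix multiplication. -/
open Matrix BigOperators Kronecker

noncomputable section

/-- Even `2N`-periodic extension of a tensor, vanishing at `N`. -/
def cpExt {n1 n2 n3 : ℕ} (A : Fin n3 → Matrix (Fin n1) (Fin n2) ℝ) (k : ZMod (2 * n3)) :
    Matrix (Fin n1) (Fin n2) ℝ :=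
  if h : k.valMinAbs.natAbs < n3 then A ⟨k.valMinAbs.natAbs, h⟩ else 0

lemma cpExt_neg {n1 n2 n3 : ℕ} (A : Fin n3 → Matrix (Fin n1) (Fin n2) ℝ) (k : ZMod (2 * n3)) :
    cpExt A (-k) = cpExt A k := by
  simp only [cpExt, ZMod.natAbs_valMinAbs_neg]

lemma cp_natAbs {n : ℕ} (j : ℕ) (h : j ≤ n) :
    ((j : ZMod (2 * n)).valMinAbs).natAbs = j := by
  rw [ZMod.valMinAbs_natCast_of_le_half (by omega)]
  simp

lemma cpExt_natCast {n1 n2 n3 : ℕ} (A : Fin n3 → Matrix (Fin n1) (Fin n2) ℝ) (j : ℕ)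
    (h : j < n3) : cpExt A (j : ZMod (2 * n3)) = A ⟨j, h⟩ := by
  simp only [cpExt, cp_natAbs j h.le, h, dite_true]

lemma cpExt_self {n1 n2 n3 : ℕ} (A : Fin n3 → Matrix (Fin n1) (Fin n2) ℝ) :
    cpExt A (n3 : ZMod (2 * n3)) = 0 := by
  simp [cpExt, cp_natAbs n3 le_rfl]

lemma cp_natCast_two (n : ℕ) : (2 : ZMod (2 * n)) * n = 0 := by
  have := ZMod.natCast_self (2 * n)
  push_cast at this
  exact this

lemma tmat_eq {n1 n2 n3 : ℕ} (A : Fin n3 → Matrix (Fin n1) (Fin n2) ℝ) (p q : Fin n3)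
    (i : Fin n1) (j : Fin n2) :
    tmat A (p, i) (q, j) = (cpExt A ((p.val : ZMod (2 * n3)) - (q.val : ZMod (2 * n3))) +
      cpExt A ((p.val : ZMod (2 * n3)) + (q.val : ZMod (2 * n3)) + 1)) i j := by
  have hp := p.isLt
  have hq := q.isLt
  have h1 : cpExt A ((p.val : ZMod (2 * n3)) - (q.val : ZMod (2 * n3))) =
      A ⟨Nat.dist p.val q.val, by simp only [Nat.dist]; omega⟩ := by
    rw [← cpExt_natCast A (Nat.dist p.val q.val)]
    rcases le_total p.val q.val with h | h
    · rw [Nat.dist_eq_sub_of_le h, ← cpExt_neg, Nat.cast_sub h, neg_sub]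
    · rw [Nat.dist_eq_sub_of_le_right h, Nat.cast_sub h]
  have h2 : cpExt A ((p.val : ZMod (2 * n3)) + (q.val : ZMod (2 * n3)) + 1) =
      hankelPart A p q := by
    have hc : (p.val : ZMod (2 * n3)) + (q.val : ZMod (2 * n3)) + 1 =
      ((p.val + q.val + 1 : ℕ) : ZMod (2 * n3)) := by push_cast; ring
    rw [hc]
    unfold hankelPart
    split_ifs with h h'
    · exact cpExt_natCast A _ h
    · rw [h']; exact cpExt_self A
    · rw [← cpExt_natCast A (2 * n3 - (p.val + q.val) - 1), ← cpExt_neg]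
      congr 1
      have : 2 * n3 - (p.val + q.val) - 1 = 2 * n3 - (p.val + q.val + 1) := by omega
      rw [this, Nat.cast_sub (by omega), ZMod.natCast_self, zero_sub]
  rw [h1, h2]
  rfl

lemma cp_sum_range {M : Type*} [AddCommMonoid M] (n : ℕ) [NeZero n] (h : ZMod n → M) :
    ∑ x, h x = ∑ r ∈ Finset.range n, h (r : ZMod n) := by
  refine Finset.sum_bij' (fun x _ => x.val) (fun r _ => (r : ZMod n)) ?_ ?_ ?_ ?_ ?_
  · intro x _; exact Finset.mem_range.2 x.val_lt
  · intro r _; exact Finset.mem_univ _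
  · intro x _; simp
  · intro r hr; exact ZMod.val_cast_of_lt (Finset.mem_range.1 hr)
  · intro x _; simp

lemma cp_fold {M : Type*} [AddCommMonoid M] (n : ℕ) [NeZero n] (h : ZMod (2 * n) → M)
    (hs : ∀ x, h (-1 - x) = h x) :
    ∑ x, h x = 2 • ∑ r : Fin n, h (r.val : ZMod (2 * n)) := by
  rw [cp_sum_range, Fin.sum_univ_eq_sum_range (fun r => h (r : ZMod (2 * n)))]
  have e : Finset.range (2 * n) = Finset.range (n + n) := by rw [two_mul]
  rw [e, Finset.sum_range_add, two_nsmul]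
  congr 1
  rw [← Finset.sum_range_reflect]
  refine Finset.sum_congr rfl fun r hr => ?_
  have hr := Finset.mem_range.1 hr
  rw [← hs]
  congr 1
  have e2 : n + (n - 1 - r) = 2 * n - (1 + r) := by omega
  rw [e2, Nat.cast_sub (by omega), ZMod.natCast_self]
  push_cast
  ring

/-- Cyclic convolution of the extensions. -/
def cpConv {n1 n2 m n3 : ℕ} [NeZero n3] (A : Fin n3 → Matrix (Fin n1) (Fin n2) ℝ)
    (B : Fin n3 → Matrix (Fin n2) (Fin m) ℝ) (k : ZMod (2 * n3)) : Matrix (Fin n1) (Fin m) ℝ :=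
  ∑ x, cpExt A (k - x) * cpExt B x

lemma cpConv_neg {n1 n2 m n3 : ℕ} [NeZero n3] (A : Fin n3 → Matrix (Fin n1) (Fin n2) ℝ)
    (B : Fin n3 → Matrix (Fin n2) (Fin m) ℝ) (k : ZMod (2 * n3)) :
    cpConv A B (-k) = cpConv A B k := by
  unfold cpConv
  rw [← Equiv.sum_comp (Equiv.neg _)]
  refine Finset.sum_congr rfl fun x _ => ?_
  simp only [Equiv.neg_apply]
  rw [cpExt_neg B, ← cpExt_neg A]
  congr 2
  ring

lemma cp_prod {n1 n2 m n3 : ℕ} [NeZero n3] (A : Fin n3 → Matrix (Fin n1) (Fin n2) ℝ)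
    (B : Fin n3 → Matrix (Fin n2) (Fin m) ℝ) (p q : ZMod (2 * n3)) :
    ∑ r : Fin n3, (cpExt A (p - (r.val : ZMod (2 * n3))) +
        cpExt A (p + (r.val : ZMod (2 * n3)) + 1)) *
      (cpExt B ((r.val : ZMod (2 * n3)) - q) + cpExt B ((r.val : ZMod (2 * n3)) + q + 1)) =
    cpConv A B (p - q) + cpConv A B (p + q + 1) := by
  have key := cp_fold n3 (fun x => (cpExt A (p - x) + cpExt A (p + x + 1)) *
      (cpExt B (x - q) + cpExt B (x + q + 1))) (by
    intro x
    have e1 : p - (-1 - x) = p + x + 1 := by ring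
    have e2 : p + (-1 - x) + 1 = p - x := by ring
    have e3 : -1 - x - q = -(x + q + 1) := by ring
    have e4 : -1 - x + q + 1 = -(x - q) := by ring
    simp only [e1, e2, e3, e4, cpExt_neg]
    rw [add_comm (cpExt A (p + x + 1)), add_comm (cpExt B (x + q + 1))])
  have s1 : ∑ x, cpExt A (p - x) * cpExt B (x - q) = cpConv A B (p - q) := by
    unfold cpConv
    symm
    rw [← Equiv.sum_comp (Equiv.subRight q)]
    refine Finset.sum_congr rfl fun x _ => ?_
    simp only [Equiv.subRight_apply]
    congr 2
    ring
  have s2 : ∑ x, cpExt A (p - x) * cpExt B (x + q + 1) = cpConv A B (p + q + 1) := by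
    unfold cpConv
    symm
    rw [← Equiv.sum_comp (Equiv.addRight (q + 1))]
    refine Finset.sum_congr rfl fun x _ => ?_
    simp only [Equiv.coe_addRight]
    congr 2
    · ring
    · ring
  have s3 : ∑ x, cpExt A (p + x + 1) * cpExt B (x - q) = cpConv A B (p + q + 1) := by
    unfold cpConv
    rw [← Equiv.sum_comp (Equiv.subLeft q)]
    refine Finset.sum_congr rfl fun x _ => ?_
    simp only [Equiv.subLeft_apply]
    rw [← cpExt_neg B]
    congr 2
    · ring
    · ring
  have s4 : ∑ x, cpExt A (p + x + 1) * cpExt B (x + q + 1) = cpConv A B (p - q) := by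
    unfold cpConv
    rw [← Equiv.sum_comp (Equiv.subLeft (-q - 1))]
    refine Finset.sum_congr rfl fun x _ => ?_
    simp only [Equiv.subLeft_apply]
    rw [← cpExt_neg B]
    congr 2
    · ring
    · ring
  simp only [Matrix.add_mul, Matrix.mul_add, Finset.sum_add_distrib] at key ⊢
  rw [s1, s2, s3, s4] at key
  have h2 : (2 : ℕ) • (cpConv A B (p - q) + cpConv A B (p + q + 1)) = 
    cpConv A B (p - q) + cpConv A B (p + q + 1) +
      (cpConv A B (p + q + 1) + cpConv A B (p - q)) := by abel
  have h3 := h2.trans (Eq.trans (by abel) key)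
  ext i j
  have h4 := congrFun (congrFun h3 i) j
  simp only [Matrix.smul_apply, nsmul_eq_mul, Nat.cast_ofNat] at h4
  exact (mul_left_cancel₀ two_ne_zero h4).symm

/-- The alternating sign, normalised to be `1` at `n`. -/
def cpSign (n : ℕ) (k : ZMod (2 * n)) : ℝ :=
  if ZMod.castHom (Dvd.intro n rfl : 2 ∣ 2 * n) (ZMod 2) k = (n : ZMod 2) then 1 else -1

lemma cpSign_self (n : ℕ) : cpSign n (n : ZMod (2 * n)) = 1 := by
  unfold cpSign
  rw [map_natCast, if_pos rfl]

lemma cpSign_neg (n : ℕ) (k : ZMod (2 * n)) : cpSign n (-k) = cpSign n k := by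
  unfold cpSign
  rw [map_neg, ZMod.neg_eq_self_mod_two]

lemma cpSign_add (n : ℕ) (p q : ZMod (2 * n)) :
    cpSign n (p - q) + cpSign n (p + q + 1) = 0 := by
  unfold cpSign
  rw [map_sub, map_add, map_add, map_one]
  generalize ZMod.castHom (Dvd.intro n rfl : 2 ∣ 2 * n) (ZMod 2) p = a
  generalize ZMod.castHom (Dvd.intro n rfl : 2 ∣ 2 * n) (ZMod 2) q = b
  generalize (n : ZMod 2) = c
  have : (a - b = c ∧ ¬ a + b + 1 = c) ∨ (¬ a - b = c ∧ a + b + 1 = c) := by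
    revert a b c; decide
  rcases this with ⟨h, h'⟩ | ⟨h, h'⟩ <;> simp [h, h']

lemma cpExt_of_even {n1 m n3 : ℕ} [NeZero n3] (c : ZMod (2 * n3) → Matrix (Fin n1) (Fin m) ℝ)
    (hc : ∀ k, c (-k) = c k) (h0 : c (n3 : ZMod (2 * n3)) = 0) (k : ZMod (2 * n3)) :
    cpExt (fun t : Fin n3 => c (t.val : ZMod (2 * n3))) k = c k := by
  have hk : c ((k.valMinAbs.natAbs : ℕ) : ZMod (2 * n3)) = c k := by
    have hcast := ZMod.coe_valMinAbs k
    rcases Int.natAbs_eq k.valMinAbs with h | h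
    · rw [h, Int.cast_natCast] at hcast
      exact congrArg c hcast
    · rw [h, Int.cast_neg, Int.cast_natCast] at hcast
      rw [← hc]
      exact congrArg c hcast
  have hle := ZMod.natAbs_valMinAbs_le k
  unfold cpExt
  split_ifs with h
  · exact hk
  · have : k.valMinAbs.natAbs = n3 := by omega
    rw [← hk, this, h0]

lemma tmat_inj {n1 m n3 : ℕ} (C D : Fin n3 → Matrix (Fin n1) (Fin m) ℝ)
    (h : tmat C = tmat D) : C = D := by
  have key : ∀ d t : ℕ, ∀ ht : t < n3, t + d + 1 = n3 → C ⟨t, ht⟩ = D ⟨t, ht⟩ := by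
    intro d
    induction d with
    | zero =>
      intro t ht e
      ext i j
      have h1 := congrFun (congrFun h (⟨t, ht⟩, i)) (⟨0, by omega⟩, j)
      rw [tmat_eq, tmat_eq] at h1
      have e' : ((t : ZMod (2 * n3)) + 1) = (n3 : ZMod (2 * n3)) := by
        rw [← e]; push_cast; ring
      simp only [Nat.cast_zero, add_zero, e', sub_zero, cpExt_self, cpExt_natCast _ t ht] at h1
      exact h1
    | succ d ih =>
      intro t ht e
      have h2 := ih (t + 1) (by omega) (by omega)
      ext i j
      have h1 := congrFun (congrFun h (⟨t, ht⟩, i)) (⟨0, by omega⟩, j)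
      rw [tmat_eq, tmat_eq] at h1
      have e' : ((t : ZMod (2 * n3)) + 1) = ((t + 1 : ℕ) : ZMod (2 * n3)) := by
        push_cast; ring
      simp only [Nat.cast_zero, add_zero, e', sub_zero, cpExt_natCast _ t ht,
        cpExt_natCast _ (t + 1) (show t + 1 < n3 by omega), h2, Matrix.add_apply] at h1
      linarith
  funext t
  exact key (n3 - 1 - t.val) t.val t.isLt (by have := t.isLt; omega)

/-- the c-product is well defined: for all tensors `A ∈ ℝ^{n1×n2×n3}` and
`B ∈ ℝ^{n2×m×n3}` there is a unique tensor `C ∈ ℝ^{n1×m×n3}` with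
`mat(C) = mat(A) · mat(B)`. -/
theorem cProd_existsUnique {n1 n2 m n3 : ℕ}
    (A : Fin n3 → Matrix (Fin n1) (Fin n2) ℝ) (B : Fin n3 → Matrix (Fin n2) (Fin m) ℝ) :
    ∃! C : Fin n3 → Matrix (Fin n1) (Fin m) ℝ, tmat C = tmat A * tmat B := by
  rcases Nat.eq_zero_or_pos n3 with h0 | h0
  · subst h0
    refine ⟨fun t => t.elim0, ?_, fun D hD => funext fun t => t.elim0⟩
    ext ⟨p, _⟩
    exact p.elim0
  have : NeZero n3 := ⟨h0.ne'⟩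
  let c : ZMod (2 * n3) → Matrix (Fin n1) (Fin m) ℝ := fun k =>
    cpConv A B k - cpSign n3 k • cpConv A B (n3 : ZMod (2 * n3))
  have hc : ∀ k, c (-k) = c k := fun k => by
    simp only [c, cpConv_neg, cpSign_neg]
  have hc0 : c (n3 : ZMod (2 * n3)) = 0 := by
    simp only [c, cpSign_self, one_smul, sub_self]
  have main : tmat (fun t : Fin n3 => c (t.val : ZMod (2 * n3))) = tmat A * tmat B := by
    ext ⟨p, i⟩ ⟨q, j⟩
    rw [tmat_eq, cpExt_of_even c hc hc0, cpExt_of_even c hc hc0]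
    have e : c ((p.val : ZMod (2 * n3)) - (q.val : ZMod (2 * n3))) +
        c ((p.val : ZMod (2 * n3)) + (q.val : ZMod (2 * n3)) + 1) =
        cpConv A B ((p.val : ZMod (2 * n3)) - (q.val : ZMod (2 * n3))) +
        cpConv A B ((p.val : ZMod (2 * n3)) + (q.val : ZMod (2 * n3)) + 1) := by
      simp only [c]
      rw [sub_add_sub_comm, ← add_smul, cpSign_add, zero_smul, sub_zero]
    rw [e, ← cp_prod, Matrix.sum_apply, Matrix.mul_apply, Fintype.sum_prod_type]
    refine Finset.sum_congr rfl fun r _ => ?_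
    rw [Matrix.mul_apply]
    refine Finset.sum_congr rfl fun s _ => ?_
    rw [tmat_eq, tmat_eq]
  exact ⟨_, main, fun D hD => tmat_inj _ _ (hD.trans main.symm)⟩

end
end

section
/- Multi-rank bound for c-products with inner dimension k: if X ∈ ℝ^{n1×k×n3}, Y ∈ ℝ^{k×n2×n3}, and C ∈ ℝ^{n1×n2×n3} satisfies mat(C) = mat(X)·mat(Y), then every transformed slice of C has rank at most k: rank(C̃^{(i)}) ≤ k for all 1 ≤ i ≤ n3. -/
open Matrix BigOperators Kronecker

noncomputable section

/-- The unnormalised cosine `cos (i (2x+1) π / (2n))`. -/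
def cosVec (n i : ℕ) (x : ℝ) : ℝ := Real.cos ((i : ℝ) * (2 * x + 1) * Real.pi / (2 * n))

lemma cosVec_zero_pos {n i : ℕ} (hi : i < n) : 0 < cosVec n i 0 := by
  have hn : (0 : ℝ) < n := by exact_mod_cast (by omega : 0 < n)
  have hi' : (i : ℝ) < n := by exact_mod_cast hi
  have hpi := Real.pi_pos
  unfold cosVec
  apply Real.cos_pos_of_mem_Ioo
  constructor
  · have : 0 ≤ (i : ℝ) * (2 * 0 + 1) * Real.pi / (2 * n) := by positivity
    linarith
  · rw [div_lt_div_iff₀ (by positivity) (by positivity)]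
    nlinarith

lemma cosVec_add (n i : ℕ) (q t : ℝ) :
    cosVec n i (q + t) + cosVec n i (q - t)
      = 2 * Real.cos ((i : ℝ) * t * Real.pi / n) * cosVec n i q := by
  unfold cosVec
  have h1 : (i : ℝ) * (2 * (q + t) + 1) * Real.pi / (2 * n)
      = (i : ℝ) * (2 * q + 1) * Real.pi / (2 * n) + (i : ℝ) * t * Real.pi / n := by
    rcases eq_or_ne (n : ℝ) 0 with h | h
    · simp [h]
    · field_simp; ring
  have h2 : (i : ℝ) * (2 * (q - t) + 1) * Real.pi / (2 * n)
      = (i : ℝ) * (2 * q + 1) * Real.pi / (2 * n) - (i : ℝ) * t * Real.pi / n := by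
    rcases eq_or_ne (n : ℝ) 0 with h | h
    · simp [h]
    · field_simp; ring
  rw [h1, h2, Real.cos_add, Real.cos_sub]; ring

lemma cosVec_neg (n i : ℕ) (x : ℝ) : cosVec n i (-1 - x) = cosVec n i x := by
  unfold cosVec
  rw [← Real.cos_neg]; congr 1; ring

lemma cosVec_refl (n i : ℕ) (hn : n ≠ 0) (x : ℝ) :
    cosVec n i (2 * n - 1 - x) = cosVec n i x := by
  unfold cosVec
  rw [← Real.cos_nat_mul_two_pi_sub _ i]; congr 1
  have : (n : ℝ) ≠ 0 := by exact_mod_cast hn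
  field_simp; ring

/-- The eigenvalue coefficient. -/
def eigCoef (n i t : ℕ) : ℝ := if t = 0 then 1 else 2 * Real.cos ((i : ℝ) * t * Real.pi / n)

lemma sum_ind (n a : ℕ) (f : ℕ → ℝ) (ha : a < n) :
    ∑ p : Fin n, f p * (if (p : ℕ) = a then 1 else 0) = f a := by
  rw [Finset.sum_eq_single (⟨a, ha⟩ : Fin n)]
  · simp
  · intro b _ hb
    have : (b : ℕ) ≠ a := fun h => hb (Fin.ext h)
    simp [this]
  · simp

/-- Coefficient of slice `t` in block `(p,q)`. -/
def blkCoef (n t p q : ℕ) : ℝ :=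
  (if Nat.dist p q = t then 1 else 0) + (if p + q + 1 = t then 1 else 0)
    + (if p + q + 1 + t = 2 * n then 1 else 0)

lemma sum_blkCoef (n i t q : ℕ) (ht : t < n) (hq : q < n) :
    ∑ p : Fin n, cosVec n i (p : ℕ) * blkCoef n t p q = eigCoef n i t * cosVec n i q := by
  by_cases h0 : t = 0
  · subst h0
    have : ∀ p : Fin n, blkCoef n 0 p q = if (p : ℕ) = q then 1 else 0 := by
      intro p
      have := p.isLt
      unfold blkCoef
      simp only [Nat.dist]
      rw [if_neg (by omega : ¬ (p : ℕ) + q + 1 = 0),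
        if_neg (by omega : ¬ (p : ℕ) + q + 1 + 0 = 2 * n), add_zero, add_zero]
      congr 1
      exact propext (by omega)
    simp only [this]
    rw [sum_ind n q (fun x => cosVec n i (x : ℝ)) hq]
    simp [eigCoef]
  · have key : ∀ p : Fin n, blkCoef n t p q
        = (if (p : ℕ) = (if t ≤ q then q - t else t - 1 - q) then 1 else 0)
        + (if (p : ℕ) = (if q + t < n then q + t else 2 * n - 1 - q - t) then 1 else 0) := by
      intro p
      have := p.isLt
      have hD : Nat.dist (p : ℕ) q = (p - q) + (q - p) := rfl
      unfold blkCoef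
      split_ifs <;> first | omega | norm_num
    simp only [key, mul_add, Finset.sum_add_distrib]
    rw [sum_ind n _ (fun x => cosVec n i (x : ℝ)) (by split_ifs <;> omega),
      sum_ind n _ (fun x => cosVec n i (x : ℝ)) (by split_ifs <;> omega)]
    rw [eigCoef, if_neg h0, ← cosVec_add, add_comm]
    congr 1
    · split_ifs with h
      · push_cast; rfl
      · rw [← cosVec_refl n i (by omega)]
        congr 1
        rw [Nat.cast_sub (by omega), Nat.cast_sub (by omega), Nat.cast_sub (by omega)]
        push_cast; ring
    · split_ifs with h
      · rw [Nat.cast_sub h]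
      · rw [← cosVec_neg]
        congr 1
        rw [Nat.cast_sub (by omega), Nat.cast_sub (by omega)]
        push_cast; ring

lemma transformM_apply (n : ℕ) (i t : Fin n) : transformM n i t = eigCoef n i t := by
  have hn : (0 : ℝ) < n := by exact_mod_cast i.pos
  have hs : ∀ i : Fin n, 0 < Real.sqrt ((2 - if (i : ℕ) = 0 then 1 else 0) / n) := by
    intro i
    apply Real.sqrt_pos.2
    refine div_pos ?_ hn
    split_ifs <;> norm_num
  have hd : ∀ i j : Fin n, dctMatrix n i j
      = Real.sqrt ((2 - if (i : ℕ) = 0 then 1 else 0) / n) * cosVec n i (j : ℕ) := by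
    intro i j; rfl
  have hne : ∀ i : Fin n, dctMatrix n i ⟨0, i.pos⟩ ≠ 0 := by
    intro i
    rw [hd]
    have := cosVec_zero_pos i.isLt
    have := hs i
    simp only [Nat.cast_zero]
    positivity
  have hinv : (Wdiag n)⁻¹ = Matrix.diagonal fun i => (dctMatrix n i ⟨0, i.pos⟩)⁻¹ := by
    apply Matrix.inv_eq_right_inv
    rw [Wdiag, Matrix.diagonal_mul_diagonal, ← Matrix.diagonal_one]
    congr 1
    funext i
    exact mul_inv_cancel₀ (hne i)
  have hc := cosVec_zero_pos i.isLt
  have hsi := hs i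
  clear hne
  rw [transformM, hinv, Matrix.mul_assoc, Matrix.diagonal_mul, Matrix.mul_add, Matrix.mul_one,
    Matrix.add_apply, Matrix.mul_apply]
  simp only [upshift, Matrix.of_apply, hd, Nat.cast_zero]
  by_cases h0 : (t : ℕ) = 0
  · simp only [h0, eigCoef, if_true, Nat.cast_zero]
    generalize Real.sqrt _ = s at hsi ⊢
    simp
    field_simp
  · have := sum_ind n (t - 1)
      (fun x => Real.sqrt ((2 - if (i : ℕ) = 0 then 1 else 0) / n) * cosVec n i (x : ℝ))
      (by omega)
    have e : ∀ x : Fin n, ((x : ℕ) + 1 = (t : ℕ)) = ((x : ℕ) = t - 1) := by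
      intro x; exact propext (by omega)
    simp only [e]
    rw [this, eigCoef, if_neg h0, Nat.cast_sub (by omega)]
    have h1 : (2 * Real.cos (((i : ℕ) : ℝ) * ((t : ℕ) : ℝ) * Real.pi / n)) * cosVec n i 0
        = cosVec n i (t : ℕ) + cosVec n i ((t : ℕ) - (1 : ℕ)) := by
      rw [← cosVec_add, zero_add, ← cosVec_neg n i (0 - _)]
      congr 2
      push_cast; ring
    rw [← mul_add, ← h1]
    field_simp

lemma tmat_apply {n1 n2 n3 : ℕ} (A : Fin n3 → Matrix (Fin n1) (Fin n2) ℝ) (p q : Fin n3)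
    (a : Fin n1) (b : Fin n2) :
    tmat A (p, a) (q, b) = ∑ t : Fin n3, blkCoef n3 t p q * A t a b := by
  have hp := p.isLt
  have hq := q.isLt
  have S : ∀ (P : ℕ → Prop) [DecidablePred P] (s : ℕ) (hs : s < n3)
      (_ : ∀ t < n3, P t ↔ t = s),
      ∑ t : Fin n3, (if P t then (1 : ℝ) else 0) * A t a b = A ⟨s, hs⟩ a b := by
    intro P _ s hs hP
    rw [Finset.sum_eq_single (⟨s, hs⟩ : Fin n3)]
    · simp [(hP s hs).2 rfl]
    · intro t _ ht
      have : ¬ P t := fun h => ht (Fin.ext ((hP t t.isLt).1 h))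
      simp [this]
    · simp
  have S0 : ∀ (P : ℕ → Prop) [DecidablePred P] (_ : ∀ t < n3, ¬ P t),
      ∑ t : Fin n3, (if P t then (1 : ℝ) else 0) * A t a b = 0 := by
    intro P _ hP
    apply Finset.sum_eq_zero
    intro t _
    simp [hP t t.isLt]
  simp only [tmat, Matrix.of_apply, Matrix.add_apply, blkCoef, add_mul, Finset.sum_add_distrib,
    add_assoc]
  congr 1
  · exact (S (fun t => Nat.dist p q = t) _ _ (fun t _ => eq_comm)).symm
  · unfold hankelPart
    split_ifs with h1 h2
    · rw [S (fun t => (p : ℕ) + (q + 1) = t) (p + q + 1) h1 (fun t _ => by omega),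
        S0 (fun t => (p : ℕ) + (q + (1 + t)) = 2 * n3) (fun t _ => by omega), add_zero]
    · rw [S0 (fun t => (p : ℕ) + (q + 1) = t) (fun t _ => by omega),
        S0 (fun t => (p : ℕ) + (q + (1 + t)) = 2 * n3) (fun t _ => by omega)]
      simp
    · rw [S0 (fun t => (p : ℕ) + (q + 1) = t) (fun t _ => by omega),
        S (fun t => (p : ℕ) + (q + (1 + t)) = 2 * n3) (2 * n3 - (p + q) - 1) (by omega)
          (fun t _ => by omega), zero_add]

lemma sum_tmat {n1 n2 n3 : ℕ} (A : Fin n3 → Matrix (Fin n1) (Fin n2) ℝ) (i q : Fin n3)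
    (a : Fin n1) (b : Fin n2) :
    ∑ p : Fin n3, cosVec n3 i (p : ℕ) * tmat A (p, a) (q, b)
      = cosVec n3 i (q : ℕ) * tSlice A i a b := by
  simp only [tmat_apply, Finset.mul_sum]
  rw [Finset.sum_comm]
  simp only [tSlice, Matrix.sum_apply, Matrix.smul_apply, smul_eq_mul, Finset.mul_sum]
  refine Finset.sum_congr rfl fun t _ => ?_
  simp only [← mul_assoc]
  rw [← Finset.sum_mul, sum_blkCoef n3 i t q t.isLt q.isLt, transformM_apply]
  ring

/-- multi-rank bound for c-products with inner dimension `k`: if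
`mat(C) = mat(X) · mat(Y)` with `X ∈ ℝ^{n1×k×n3}` and `Y ∈ ℝ^{k×n2×n3}`, then every
transformed slice of `C` has rank at most `k`. -/
theorem multiRank_bound {n1 n2 k n3 : ℕ}
    (X : Fin n3 → Matrix (Fin n1) (Fin k) ℝ) (Y : Fin n3 → Matrix (Fin k) (Fin n2) ℝ)
    (C : Fin n3 → Matrix (Fin n1) (Fin n2) ℝ)
    (h : tmat C = tmat X * tmat Y) :
    ∀ i, (tSlice C i).rank ≤ k := by
  intro i
  have key : tSlice C i = tSlice X i * tSlice Y i := by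
    ext a b
    have hc := cosVec_zero_pos i.isLt
    have e := sum_tmat C i ⟨0, i.pos⟩ a b
    simp only [Nat.cast_zero] at e
    apply mul_left_cancel₀ hc.ne'
    rw [← e, h, Matrix.mul_apply, Finset.mul_sum]
    simp only [Matrix.mul_apply, Finset.mul_sum, Fintype.sum_prod_type]
    rw [Finset.sum_comm]
    have e1 : ∀ r : Fin n3, ∑ p : Fin n3, ∑ l : Fin k, cosVec n3 i (p : ℕ) *
        (tmat X (p, a) (r, l) * tmat Y (r, l) (⟨0, i.pos⟩, b))
        = ∑ l : Fin k, tSlice X i a l *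
          (cosVec n3 i (r : ℕ) * tmat Y (r, l) (⟨0, i.pos⟩, b)) := by
      intro r
      rw [Finset.sum_comm]
      refine Finset.sum_congr rfl fun l _ => ?_
      simp only [← mul_assoc]
      rw [← Finset.sum_mul, sum_tmat]
      ring
    simp only [e1]
    rw [Finset.sum_comm]
    refine Finset.sum_congr rfl fun l _ => ?_
    rw [← Finset.mul_sum, sum_tmat]
    simp only [Nat.cast_zero]
    ring
  rw [key]
  calc _ ≤ (tSlice X i).rank := Matrix.rank_mul_le_left _ _
    _ ≤ Fintype.card (Fin k) := Matrix.rank_le_card_width _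
    _ = k := Fintype.card_fin k

end
end

section
/- Eckart–Young theorem for the c-product (transform-domain form): let A ∈ ℝ^{n1×n2×n3}, let k ≤ min(n1,n2), and let A_k ∈ ℝ^{n1×n2×n3} be a tensor such that for every i, the transformed slice (Ã_k)^{(i)} minimizes ‖Ã^{(i)} − R‖_F over all n1×n2 real matrices R of rank at most k. Then for all X ∈ ℝ^{n1×k×n3} and Y ∈ ℝ^{k×n2×n3}, writing X ⋆_c Y for the tensor C with mat(C) = mat(X)·mat(Y), one has Σ_{i=1}^{n3} ‖Ã^{(i)} − ((X ⋆_c Y)~)^{(i)}‖_F² ≥ Σ_{i=1}^{n3} ‖Ã^{(i)} − (Ã_k)^{(i)}‖_F². -/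
open Matrix BigOperators Kronecker

noncomputable section

/-- The unnormalised DCT basis vector. -/
def ecU (n p r : ℕ) : ℝ := Real.cos ((p : ℝ) * (2 * (r : ℝ) + 1) * Real.pi / (2 * n))

/-- The entries of the transform matrix in closed form. -/
def ecM (n p q : ℕ) : ℝ :=
  if q = 0 then 1 else 2 * Real.cos ((p : ℝ) * (2 * (q : ℝ)) * Real.pi / (2 * n))

/-- The coefficient of the `q`-th entry in the Toeplitz-plus-Hankel matrix. -/
def ecC (n r s q : ℕ) : ℝ :=
  (if Nat.dist r s = q then 1 else 0) + (if r + s + 1 = q then 1 else 0) +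
    (if r + s + 1 + q = 2 * n then 1 else 0)

theorem ecU_zero_ne {n p : ℕ} (hp : p < n) : ecU n p 0 ≠ 0 := by
  have hn : (0 : ℝ) < n := by exact_mod_cast (by omega : 0 < n)
  have hpn : (p : ℝ) < n := by exact_mod_cast hp
  have hp0 : (0 : ℝ) ≤ p := by positivity
  apply ne_of_gt
  unfold ecU
  apply Real.cos_pos_of_mem_Ioo
  constructor
  · have : 0 ≤ (p : ℝ) * (2 * ((0 : ℕ) : ℝ) + 1) * Real.pi / (2 * n) := by positivity
    linarith [Real.pi_pos]
  · rw [div_lt_div_iff₀ (by positivity) (by positivity)]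
    push_cast
    nlinarith [Real.pi_pos]

theorem ecU_add {n p s q r₁ r₂ : ℕ} (hn : 0 < n)
    (h₁ : r₁ + q = s ∨ r₁ + s + 1 = q) (h₂ : r₂ = s + q ∨ r₂ + s + 1 + q = 2 * n) :
    ecU n p r₁ + ecU n p r₂ =
      2 * Real.cos ((p : ℝ) * (2 * (q : ℝ)) * Real.pi / (2 * n)) * ecU n p s := by
  have hn' : (n : ℝ) ≠ 0 := by positivity
  have e₁ : ecU n p r₁ = Real.cos ((p : ℝ) * (2 * (s : ℝ) + 1) * Real.pi / (2 * n) -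
      (p : ℝ) * (2 * (q : ℝ)) * Real.pi / (2 * n)) := by
    unfold ecU
    rcases h₁ with h | h
    · subst h
      congr 1
      push_cast
      ring
    · subst h
      rw [← Real.cos_neg]
      congr 1
      push_cast
      ring
  have e₂ : ecU n p r₂ = Real.cos ((p : ℝ) * (2 * (s : ℝ) + 1) * Real.pi / (2 * n) +
      (p : ℝ) * (2 * (q : ℝ)) * Real.pi / (2 * n)) := by
    unfold ecU
    rcases h₂ with h | h
    · subst h
      congr 1
      push_cast
      ring
    · have hr : (r₂ : ℝ) = 2 * n - q - s - 1 := by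
        have : (r₂ : ℝ) + s + 1 + q = 2 * n := by exact_mod_cast h
        linarith
      rw [hr, ← Real.cos_nat_mul_two_pi_sub _ p]
      congr 1
      field_simp
      ring
  rw [e₁, e₂, Real.cos_sub, Real.cos_add]
  unfold ecU
  ring

theorem ec_key {n : ℕ} (p s q : Fin n) :
    ∑ r : Fin n, ecU n p r * ecC n r s q = ecM n p q * ecU n p s := by
  have hn : 0 < n := p.pos
  have hs := s.isLt
  have hq := q.isLt
  unfold ecM
  split_ifs with h0
  · have : ∀ r : Fin n, ecU n p r * ecC n r s q = if r = s then ecU n p r else 0 := by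
      intro r
      have hr := r.isLt
      have a₂ : ¬ ((r : ℕ) + s + 1 = q) := by omega
      have a₃ : ¬ ((r : ℕ) + s + 1 + q = 2 * n) := by omega
      have a₁ : (Nat.dist r s = q) ↔ r = s := by
        rw [Fin.ext_iff, Nat.dist]; omega
      unfold ecC
      rw [if_neg a₂, if_neg a₃]
      by_cases h : r = s
      · rw [if_pos (a₁.mpr h), if_pos h]
        ring
      · rw [if_neg (fun h' => h (a₁.mp h')), if_neg h]
        ring
    rw [Finset.sum_congr rfl fun r _ => this r]
    simp
  · obtain ⟨r₁, h₁⟩ : ∃ r₁ : Fin n, (r₁ : ℕ) + q = s ∨ (r₁ : ℕ) + s + 1 = q := by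
      by_cases h : (q : ℕ) ≤ s
      · exact ⟨⟨s - q, by omega⟩, by left; simp only; omega⟩
      · exact ⟨⟨q - s - 1, by omega⟩, by right; simp only; omega⟩
    obtain ⟨r₂, h₂⟩ : ∃ r₂ : Fin n, (r₂ : ℕ) = s + q ∨ (r₂ : ℕ) + s + 1 + q = 2 * n := by
      by_cases h : (s : ℕ) + q < n
      · exact ⟨⟨s + q, h⟩, by left; rfl⟩
      · exact ⟨⟨2 * n - q - s - 1, by omega⟩, by right; simp only; omega⟩
    rw [← ecU_add hn h₁ h₂]
    have : ∀ r : Fin n, ecU n p r * ecC n r s q =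
        (if r = r₁ then ecU n p r else 0) + (if r = r₂ then ecU n p r else 0) := by
      intro r
      have hr := r.isLt
      have hr₁ := r₁.isLt
      have hr₂ := r₂.isLt
      have hc : ecC n r s q = (if r = r₁ then 1 else 0) + (if r = r₂ then 1 else 0) := by
        unfold ecC
        generalize hd : Nat.dist r s = d
        simp only [Nat.dist] at hd
        split_ifs <;> simp only [Fin.ext_iff] at * <;> first | omega | norm_num
      rw [hc]
      split_ifs <;> ring
    rw [Finset.sum_congr rfl fun r _ => this r, Finset.sum_add_distrib]
    simp

theorem ec_transformM {n : ℕ} (p q : Fin n) : transformM n p q = ecM n p q := by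
  have hn : 0 < n := p.pos
  have hn' : (0 : ℝ) < n := by exact_mod_cast hn
  have hu := ecU_zero_ne p.isLt
  set c : ℝ := Real.sqrt ((2 - if (p : ℕ) = 0 then 1 else 0) / n) with hc
  have hc0 : c ≠ 0 := by
    apply ne_of_gt
    apply Real.sqrt_pos.mpr
    apply div_pos _ hn'
    split_ifs <;> norm_num
  have hd : ∀ j : Fin n, dctMatrix n p j = c * ecU n p j := fun j => rfl
  have hW : (Wdiag n)⁻¹ = Matrix.diagonal fun i => (dctMatrix n i ⟨0, i.pos⟩)⁻¹ := by
    apply Matrix.inv_eq_left_inv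
    unfold Wdiag
    rw [Matrix.diagonal_mul_diagonal, ← Matrix.diagonal_one]
    congr 1
    funext i
    apply inv_mul_cancel₀
    have : dctMatrix n i ⟨0, i.pos⟩ =
      Real.sqrt ((2 - if (i : ℕ) = 0 then 1 else 0) / n) * ecU n i 0 := rfl
    rw [this]
    apply mul_ne_zero _ (ecU_zero_ne i.isLt)
    apply ne_of_gt
    apply Real.sqrt_pos.mpr
    apply div_pos _ hn'
    split_ifs <;> norm_num
  have hd0 : dctMatrix n p ⟨0, p.pos⟩ = c * ecU n p 0 := rfl
  rw [transformM, hW, Matrix.mul_assoc, Matrix.diagonal_mul, Matrix.mul_add, Matrix.mul_one,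
    Matrix.add_apply, Matrix.mul_apply, hd0, hd]
  unfold ecM
  split_ifs with h0
  · have : ∑ j, dctMatrix n p j * upshift n j q = 0 := by
      apply Finset.sum_eq_zero
      intro j _
      have : ¬ ((j : ℕ) + 1 = q) := by omega
      simp [upshift, this]
    rw [this, h0, add_zero]
    field_simp
  · have : ∑ j, dctMatrix n p j * upshift n j q = c * ecU n p ((q : ℕ) - 1) := by
      rw [Finset.sum_eq_single (⟨(q : ℕ) - 1, by omega⟩ : Fin n)]
      · have : (q : ℕ) - 1 + 1 = q := by omega
        simp [upshift, this, hd]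
      · intro j _ hj
        have : ¬ ((j : ℕ) + 1 = q) := by
          intro h
          apply hj
          ext
          simp only
          omega
        simp [upshift, this]
      · simp
    have key := ecU_add (n := n) (p := p) (s := 0) (q := q) (r₁ := (q : ℕ) - 1) (r₂ := q) hn
      (by right; omega) (by left; omega)
    rw [this, ← mul_add, add_comm (ecU n p q), key]
    field_simp

theorem ec_tmat {n1 n2 n : ℕ} (A : Fin n → Matrix (Fin n1) (Fin n2) ℝ) (r s : Fin n)
    (i : Fin n1) (j : Fin n2) :
    tmat A (r, i) (s, j) = ∑ q : Fin n, ecC n r s q * A q i j := by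
  have hr := r.isLt
  have hs := s.isLt
  simp only [ecC, add_mul, Finset.sum_add_distrib, ite_mul, one_mul, zero_mul]
  have hd : Nat.dist r s < n := by simp only [Nat.dist]; omega
  have e₁ : ∑ q : Fin n, (if Nat.dist r s = q then A q i j else 0) = A ⟨Nat.dist r s, hd⟩ i j := by
    rw [Finset.sum_eq_single (⟨Nat.dist r s, hd⟩ : Fin n)]
    · simp
    · intro b _ hb
      rw [if_neg]
      intro h
      exact hb (Fin.ext h.symm)
    · simp
  rw [e₁, add_assoc]
  simp only [tmat, Matrix.of_apply, Matrix.add_apply]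
  congr 1
  unfold hankelPart
  split_ifs with h h'
  · rw [Finset.sum_eq_single (⟨(r : ℕ) + s + 1, h⟩ : Fin n),
      Finset.sum_eq_zero (f := fun q : Fin n => if (r : ℕ) + s + 1 + q = 2 * n then A q i j else 0)]
    · simp
    · intro q _
      have := q.isLt
      rw [if_neg (by omega)]
    · intro b _ hb
      rw [if_neg]
      intro h
      exact hb (Fin.ext h.symm)
    · simp
  · rw [Finset.sum_eq_zero, Finset.sum_eq_zero]
    · simp
    · intro q _
      have := q.isLt
      rw [if_neg (by omega)]
    · intro q _
      have := q.isLt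
      rw [if_neg (by omega)]
  · have hlt : 2 * n - ((r : ℕ) + s) - 1 < n := by omega
    rw [Finset.sum_eq_zero, zero_add,
      Finset.sum_eq_single (⟨2 * n - ((r : ℕ) + s) - 1, hlt⟩ : Fin n)]
    · rw [if_pos (by simp only; omega)]
    · intro b _ hb
      rw [if_neg]
      intro h
      apply hb
      ext
      simp only
      omega
    · simp
    · intro q _
      have := q.isLt
      rw [if_neg (by omega)]

theorem ec_row {n1 n2 n : ℕ} (A : Fin n → Matrix (Fin n1) (Fin n2) ℝ) (p s : Fin n)
    (i : Fin n1) (j : Fin n2) :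
    ∑ r : Fin n, ecU n p r * tmat A (r, i) (s, j) = tSlice A p i j * ecU n p s := by
  simp only [ec_tmat, Finset.mul_sum]
  rw [Finset.sum_comm]
  simp only [tSlice, Matrix.sum_apply, Matrix.smul_apply, smul_eq_mul, Finset.sum_mul,
    ec_transformM]
  refine Finset.sum_congr rfl fun q _ => ?_
  rw [mul_right_comm, ← ec_key, Finset.sum_mul]
  exact Finset.sum_congr rfl fun r _ => by ring

theorem ec_tSlice_mul {n1 n2 n k : ℕ} (X : Fin n → Matrix (Fin n1) (Fin k) ℝ)
    (Y : Fin n → Matrix (Fin k) (Fin n2) ℝ) (C : Fin n → Matrix (Fin n1) (Fin n2) ℝ)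
    (h : tmat C = tmat X * tmat Y) (p : Fin n) :
    tSlice C p = tSlice X p * tSlice Y p := by
  ext i j
  have hu : ecU n p (⟨0, p.pos⟩ : Fin n) ≠ 0 := ecU_zero_ne p.isLt
  apply mul_right_cancel₀ hu
  have h1 : ∀ x : Fin k, tSlice X p i x * tSlice Y p x j * ecU n p (⟨0, p.pos⟩ : Fin n) =
      ∑ t : Fin n, ∑ r : Fin n,
        ecU n p r * (tmat X (r, i) (t, x) * tmat Y (t, x) (⟨0, p.pos⟩, j)) := by
    intro x
    rw [mul_assoc, ← ec_row Y, Finset.mul_sum]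
    refine Finset.sum_congr rfl fun t _ => ?_
    rw [← mul_assoc, ← ec_row X, Finset.sum_mul]
    exact Finset.sum_congr rfl fun r _ => by ring
  rw [← ec_row, h, Matrix.mul_apply, Finset.sum_mul, Finset.sum_congr rfl fun x _ => h1 x]
  simp only [Matrix.mul_apply, Fintype.sum_prod_type, Finset.mul_sum]
  rw [Finset.sum_comm, Finset.sum_congr rfl fun t _ => Finset.sum_comm, Finset.sum_comm]

/-- Eckart–Young for the c-product, transform-domain form: if each transformed
slice of `A_k` minimizes `‖Ã^{(i)} − R‖_F` over the rank-`≤ k` matrices `R`, then for every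
c-product `X ⋆_c Y` with inner dimension `k` (i.e. every `C` with `mat(C) = mat(X)·mat(Y)`),
`Σ_i ‖Ã^{(i)} − C̃^{(i)}‖_F² ≥ Σ_i ‖Ã^{(i)} − (Ã_k)^{(i)}‖_F²`. -/
theorem c_eckart_young {n1 n2 n3 k : ℕ} (hk : k ≤ min n1 n2)
    (A Ak : Fin n3 → Matrix (Fin n1) (Fin n2) ℝ)
    (hAk : ∀ i, (tSlice Ak i).rank ≤ k ∧
      ∀ R : Matrix (Fin n1) (Fin n2) ℝ, R.rank ≤ k →
        frobNorm (tSlice A i - tSlice Ak i) ≤ frobNorm (tSlice A i - R)) :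
    ∀ (X : Fin n3 → Matrix (Fin n1) (Fin k) ℝ) (Y : Fin n3 → Matrix (Fin k) (Fin n2) ℝ)
      (C : Fin n3 → Matrix (Fin n1) (Fin n2) ℝ), tmat C = tmat X * tmat Y →
      ∑ i, frobNorm (tSlice A i - tSlice Ak i) ^ 2 ≤
        ∑ i, frobNorm (tSlice A i - tSlice C i) ^ 2 := by
  intro X Y C h
  refine Finset.sum_le_sum fun i _ => ?_
  have hr : (tSlice C i).rank ≤ k := by
    rw [ec_tSlice_mul X Y C h i]
    exact (Matrix.rank_mul_le_left _ _).trans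
      ((Matrix.rank_le_card_width _).trans (by simp))
  exact pow_le_pow_left₀ (Real.sqrt_nonneg _) ((hAk i).2 _ hr) 2


end
end
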